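/- arXiv:math/0602337 — 2 statements merged into one kernel-verified Lean document; each statement's English description precedes it below -/
import Mathlib

section
/- Let u(y,t) = ∫_{ℝⁿ} K(y,z,t) u₀(z) dz, where K is the Euclidean heat kernel on ℝⁿ and u₀ : ℝⁿ → ℝ is continuous, compactly supported, nonnegative, and not identically zero. Then for every y ∈ ℝⁿ and t > 0 one has the Li–Yau inequality Δ log u(y,t) + n/(2t) ≥ 0; equivalently, Δu - ‖∇u‖²/u + (n/(2t)) u ≥ 0. -/
open Real MeasureTheory Filter Set

/-- The Euclidean heat kernel on ℝⁿ. -/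
noncomputable def heatK (n : ℕ) (x y : EuclideanSpace ℝ (Fin n)) (t : ℝ) : ℝ :=
  (4 * π * t) ^ (-(n : ℝ) / 2) * Real.exp (-‖x - y‖ ^ 2 / (4 * t))

/-- `i`-th partial derivative of `f : ℝⁿ → ℝ`. -/
noncomputable def pdv {n : ℕ} (i : Fin n) (f : EuclideanSpace ℝ (Fin n) → ℝ)
    (y : EuclideanSpace ℝ (Fin n)) : ℝ :=
  fderiv ℝ f y (EuclideanSpace.single i 1)

/-- Euclidean Laplacian (trace of the Hessian) of `f : ℝⁿ → ℝ`. -/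
noncomputable def lap {n : ℕ} (f : EuclideanSpace ℝ (Fin n) → ℝ)
    (y : EuclideanSpace ℝ (Fin n)) : ℝ :=
  ∑ i, pdv i (pdv i f) y

/-!
Expanding the square in the Gaussian shows that `u(y,t) exp(‖y‖² / (4t))` is the Laplace transform
of a positive measure, hence log-convex in `y`; since `‖y‖² / (4t)` has Laplacian `n / (2t)`, this
gives the Li–Yau inequality. Concretely, differentiation under the integral sign expresses `∂ᵢu` and
`∂ᵢ∂ᵢu` through the moments of orders `0`, `1`, `2` of `yᵢ - zᵢ` against the heat kernel, and
Cauchy–Schwarz for these moments reads `(∂ᵢu)² ≤ u (∂ᵢ∂ᵢu + u / (2t))`; sum over `i`.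
-/

section IntegralLemmas

variable {α : Type*} [MeasurableSpace α] {μ : Measure α}

theorem sq_integral_mul_le {f w : α → ℝ} (hw : 0 ≤ w) (hw_int : Integrable w μ)
    (hfw : Integrable (fun a => f a * w a) μ) (hffw : Integrable (fun a => f a ^ 2 * w a) μ) :
    (∫ a, f a * w a ∂μ) ^ 2 ≤ (∫ a, w a ∂μ) * ∫ a, f a ^ 2 * w a ∂μ := by
  have quadratic_nonneg (s : ℝ) : 0 ≤ (∫ a, w a ∂μ) * (s * s) + (2 * ∫ a, f a * w a ∂μ) * s +
      ∫ a, f a ^ 2 * w a ∂μ :=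
    calc 0 ≤ ∫ a, (s + f a) ^ 2 * w a ∂μ :=
          integral_nonneg fun a => mul_nonneg (sq_nonneg _) (hw a)
      _ = ∫ a, (s * s * w a + 2 * s * (f a * w a) + f a ^ 2 * w a) ∂μ := by
          congr 1 with a
          ring
      _ = _ := by
          rw [integral_add (by fun_prop) hffw, integral_add (by fun_prop) (by fun_prop),
            integral_const_mul, integral_const_mul]
          ring
  have := discrim_le_zero quadratic_nonneg
  rw [discrim] at this
  linarith

theorem integral_pos_of_pos [NeZero μ] {f : α → ℝ} (hf : ∀ a, 0 < f a) (hf_int : Integrable f μ) :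
    0 < ∫ a, f a ∂μ := by
  have support_eq : Function.support f = univ := eq_univ_of_forall fun a => (hf a).ne'
  rw [integral_pos_iff_support_of_nonneg (fun a => (hf a).le) hf_int, support_eq]
  exact Measure.measure_univ_pos.2 (NeZero.ne μ)

theorem hasFDerivAt_integral_of_norm_fderiv_le [IsFiniteMeasure μ] {E G : Type*}
    [NormedAddCommGroup E] [NormedSpace ℝ E] [NormedAddCommGroup G] [NormedSpace ℝ G]
    {F : E → α → G} {F' : E → α → E →L[ℝ] G} {C : ℝ} {x₀ : E} (hF : ∀ x, Integrable (F x) μ)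
    (hF' : AEStronglyMeasurable (F' x₀) μ) (hFF' : ∀ x a, HasFDerivAt (F · a) (F' x a) x)
    (hC : ∀ x a, ‖F' x a‖ ≤ C) :
    HasFDerivAt (fun x => ∫ a, F x a ∂μ) (∫ a, F' x₀ a ∂μ) x₀ :=
  hasFDerivAt_integral_of_dominated_of_fderiv_le univ_mem
    (.of_forall fun x => (hF x).aestronglyMeasurable) (hF x₀) hF' (.of_forall fun a x _ => hC x a)
    (integrable_const C) (.of_forall fun a x _ => hFF' x a)

theorem integral_withDensity_ofReal {f : α → ℝ} (hf : Measurable f) (hf_nonneg : 0 ≤ f)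
    (g : α → ℝ) :
    ∫ a, g a ∂μ.withDensity (fun a => ENNReal.ofReal (f a)) = ∫ a, g a * f a ∂μ := by
  rw [integral_withDensity_eq_integral_toReal_smul hf.ennreal_ofReal (by simp)]
  congr 1 with a
  rw [ENNReal.toReal_ofReal (hf_nonneg a), smul_eq_mul, mul_comm]

theorem neZero_withDensity_ofReal [TopologicalSpace α] [OpensMeasurableSpace α]
    [μ.IsOpenPosMeasure] {f : α → ℝ} (hf : Continuous f) (hf_pos : ∃ a, 0 < f a) :
    NeZero (μ.withDensity fun a => ENNReal.ofReal (f a)) := by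
  refine ⟨fun h => ?_⟩
  obtain ⟨a, ha⟩ := hf_pos
  rw [withDensity_eq_zero_iff hf.measurable.ennreal_ofReal.aemeasurable] at h
  have := (ENNReal.continuous_ofReal.comp hf).ae_eq_iff_eq μ continuous_const |>.1 h
  exact (ENNReal.ofReal_pos.2 ha).ne' (congrFun this a)

end IntegralLemmas

section PartialDerivatives

variable {n : ℕ} {f : EuclideanSpace ℝ (Fin n) → ℝ} {y : EuclideanSpace ℝ (Fin n)}

theorem norm_gradient_sq (f : EuclideanSpace ℝ (Fin n) → ℝ) (y : EuclideanSpace ℝ (Fin n)) :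
    ‖gradient f y‖ ^ 2 = ∑ i, pdv i f y ^ 2 := by
  rw [← (EuclideanSpace.basisFun (Fin n) ℝ).sum_sq_inner_left]
  simp only [inner_gradient_left, EuclideanSpace.basisFun_apply, pdv]

theorem pdv_log (hf : DifferentiableAt ℝ f y) (hy : f y ≠ 0) (i : Fin n) :
    pdv i (fun x => log (f x)) y = pdv i f y * (f y)⁻¹ := by
  simp [pdv, fderiv.log hf hy, mul_comm]

theorem pdv_pdv_log (hf : ∀ᶠ x in nhds y, DifferentiableAt ℝ f x) {i : Fin n}
    (hfi : DifferentiableAt ℝ (pdv i f) y) (hy : f y ≠ 0) :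
    pdv i (pdv i fun x => log (f x)) y = pdv i (pdv i f) y / f y - pdv i f y ^ 2 / f y ^ 2 := by
  have hfy : DifferentiableAt ℝ f y := hf.self_of_nhds
  have hinv : HasFDerivAt (fun x => (f x)⁻¹) (-(f y ^ 2)⁻¹ • fderiv ℝ f y) y :=
    (hasDerivAt_inv hy).comp_hasFDerivAt y hfy.hasFDerivAt
  have hlog : pdv i (fun x => log (f x)) =ᶠ[nhds y] fun x => pdv i f x * (f x)⁻¹ := by
    filter_upwards [hf, hfy.continuousAt.eventually_ne hy] with x hfx hx using pdv_log hfx hx i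
  rw [pdv, hlog.fderiv_eq, (hfi.hasFDerivAt.fun_mul hinv).fderiv]
  change pdv i f y * (-(f y ^ 2)⁻¹ * pdv i f y) + (f y)⁻¹ * pdv i (pdv i f) y = _
  ring

theorem lap_log (hf : ∀ᶠ x in nhds y, DifferentiableAt ℝ f x)
    (hfi : ∀ i, DifferentiableAt ℝ (pdv i f) y) (hy : f y ≠ 0) :
    lap (fun x => log (f x)) y = lap f y / f y - ‖gradient f y‖ ^ 2 / f y ^ 2 := by
  simp only [lap, norm_gradient_sq, Finset.sum_div, ← Finset.sum_sub_distrib,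
    pdv_pdv_log hf (hfi _) hy]

end PartialDerivatives

section HeatKernel

variable {n : ℕ} {t : ℝ}

theorem heatK_pos (ht : 0 < t) (y z : EuclideanSpace ℝ (Fin n)) : 0 < heatK n y z t := by
  unfold heatK
  positivity

@[fun_prop]
theorem continuous_heatK (y : EuclideanSpace ℝ (Fin n)) (t : ℝ) :
    Continuous fun z => heatK n y z t := by
  unfold heatK
  fun_prop

theorem hasFDerivAt_heatK (y z : EuclideanSpace ℝ (Fin n)) (t : ℝ) :
    HasFDerivAt (fun y => heatK n y z t) (-(heatK n y z t / (2 * t)) • innerSL ℝ (y - z)) y := by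
  have hsq : HasFDerivAt (fun y : EuclideanSpace ℝ (Fin n) => ‖y - z‖ ^ 2)
      (2 • innerSL ℝ (y - z)) y := by
    simpa using ((hasFDerivAt_id y).sub_const z).norm_sq
  have hK := ((hsq.neg.mul_const (4 * t)⁻¹).exp).const_mul ((4 * π * t) ^ (-(n : ℝ) / 2))
  simp only [heatK, div_eq_mul_inv] at hK ⊢
  refine hK.congr_fderiv ?_
  ext v
  simp only [Pi.neg_apply, mul_inv_rev, map_sub, neg_apply, smul_apply, sub_apply,
    coe_innerSL_apply, nsmul_eq_mul, Nat.cast_ofNat, smul_eq_mul]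
  ring

theorem pow_mul_exp_neg_sq_div_le {r : ℝ} (ht : 0 < t) (hr : 0 ≤ r) (m : ℕ) :
    r ^ m * exp (-r ^ 2 / t) ≤ m.factorial * t ^ m * exp (1 / t) := by
  have hexp : ((1 + r ^ 2) / t) ^ m ≤ m.factorial * exp ((1 + r ^ 2) / t) := by
    rw [mul_comm, ← div_le_iff₀ (by positivity)]
    exact pow_div_factorial_le_exp _ (by positivity) m
  calc r ^ m * exp (-r ^ 2 / t)
      ≤ (1 + r ^ 2) ^ m * exp (-r ^ 2 / t) := by
        gcongr
        nlinarith [sq_nonneg (r - 1)]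
    _ = t ^ m * ((1 + r ^ 2) / t) ^ m * exp (-r ^ 2 / t) := by
        rw [← mul_pow, mul_div_cancel₀ _ ht.ne']
    _ ≤ t ^ m * (m.factorial * exp ((1 + r ^ 2) / t)) * exp (-r ^ 2 / t) := by gcongr
    _ = m.factorial * t ^ m * (exp ((1 + r ^ 2) / t) * exp (-r ^ 2 / t)) := by ring
    _ = m.factorial * t ^ m * exp (1 / t) := by
        rw [← exp_add]
        ring_nf

theorem exists_norm_pow_mul_heatK_le (n : ℕ) (ht : 0 < t) (m : ℕ) :
    ∃ C, ∀ y z : EuclideanSpace ℝ (Fin n), ‖y - z‖ ^ m * heatK n y z t ≤ C := by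
  refine ⟨(4 * π * t) ^ (-(n : ℝ) / 2) * (m.factorial * (4 * t) ^ m * exp (1 / (4 * t))),
    fun y z => ?_⟩
  rw [heatK, mul_left_comm]
  exact mul_le_mul_of_nonneg_left
    (pow_mul_exp_neg_sq_div_le (by positivity) (norm_nonneg _) m) (by positivity)

theorem abs_sub_apply_le_norm_sub (y z : EuclideanSpace ℝ (Fin n)) (i : Fin n) :
    |y i - z i| ≤ ‖y - z‖ := by
  simpa using PiLp.norm_apply_le (y - z) i

/-- The derivative in `y` of `(yᵢ - zᵢ) ^ m * heatK n y z t`. The subtraction `m - 1` is truncated,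
which is harmless as its term vanishes for `m = 0`. -/
noncomputable def fderivMomentKernel (t : ℝ) (i : Fin n) (m : ℕ)
    (y z : EuclideanSpace ℝ (Fin n)) : EuclideanSpace ℝ (Fin n) →L[ℝ] ℝ :=
  (m * ((y i - z i) ^ (m - 1) * heatK n y z t)) • innerSL ℝ (EuclideanSpace.single i 1) -
    ((y i - z i) ^ m * heatK n y z t / (2 * t)) • innerSL ℝ (y - z)

@[fun_prop]
theorem continuous_fderivMomentKernel (t : ℝ) (i : Fin n) (m : ℕ)
    (y : EuclideanSpace ℝ (Fin n)) : Continuous (fderivMomentKernel t i m y) := by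
  unfold fderivMomentKernel
  fun_prop

theorem fderivMomentKernel_apply_single (t : ℝ) (i : Fin n) (m : ℕ)
    (y z : EuclideanSpace ℝ (Fin n)) :
    fderivMomentKernel t i m y z (EuclideanSpace.single i 1) =
      m * ((y i - z i) ^ (m - 1) * heatK n y z t) -
        (2 * t)⁻¹ * ((y i - z i) ^ (m + 1) * heatK n y z t) := by
  simp only [fderivMomentKernel, map_sub, sub_apply, smul_apply, coe_innerSL_apply,
    EuclideanSpace.inner_single_right, PiLp.single_eq_same, ringHom_apply, smul_eq_mul]
  ring

theorem hasFDerivAt_momentKernel (t : ℝ) (i : Fin n) (m : ℕ) (y z : EuclideanSpace ℝ (Fin n)) :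
    HasFDerivAt (fun y => (y i - z i) ^ m * heatK n y z t) (fderivMomentKernel t i m y z) y := by
  have hcoord : HasFDerivAt (fun y : EuclideanSpace ℝ (Fin n) => y i - z i)
      (EuclideanSpace.proj (𝕜 := ℝ) i) y :=
    (EuclideanSpace.proj (𝕜 := ℝ) i).hasFDerivAt.sub_const (z i)
  refine ((hcoord.pow m).mul (hasFDerivAt_heatK y z t)).congr_fderiv ?_
  ext v
  simp only [fderivMomentKernel, map_sub, add_apply, sub_apply, smul_apply, coe_innerSL_apply,
    nsmul_eq_mul, smul_eq_mul, PiLp.proj_apply, EuclideanSpace.inner_single_left, ringHom_apply]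
  ring

theorem exists_norm_fderivMomentKernel_le (ht : 0 < t) (i : Fin n) (m : ℕ) :
    ∃ C, ∀ y z : EuclideanSpace ℝ (Fin n), ‖fderivMomentKernel t i m y z‖ ≤ C := by
  obtain ⟨A, hA⟩ := exists_norm_pow_mul_heatK_le n ht (m - 1)
  obtain ⟨B, hB⟩ := exists_norm_pow_mul_heatK_le n ht (m + 1)
  refine ⟨m * A + B / (2 * t), fun y z => ?_⟩
  have hcoord := abs_sub_apply_le_norm_sub y z i
  have hK := (heatK_pos ht y z).le
  calc ‖fderivMomentKernel t i m y z‖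
      ≤ m * (|y i - z i| ^ (m - 1) * heatK n y z t) +
          |y i - z i| ^ m * heatK n y z t / (2 * t) * ‖y - z‖ := by
        refine (norm_sub_le _ _).trans_eq ?_
        simp only [norm_smul, innerSL_apply_norm]
        simp [abs_of_pos ht, abs_of_nonneg hK]
    _ ≤ m * (‖y - z‖ ^ (m - 1) * heatK n y z t) +
          ‖y - z‖ ^ m * heatK n y z t / (2 * t) * ‖y - z‖ := by gcongr
    _ = m * (‖y - z‖ ^ (m - 1) * heatK n y z t) +
          ‖y - z‖ ^ (m + 1) * heatK n y z t / (2 * t) := by ring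
    _ ≤ m * A + B / (2 * t) := by
        gcongr
        exacts [hA y z, hB y z]

end HeatKernel

section HeatFlow

variable {n : ℕ} (μ : Measure (EuclideanSpace ℝ (Fin n))) {t : ℝ}

/-- The solution at time `t` of the heat equation on `ℝⁿ` whose initial datum is the measure `μ`. -/
noncomputable def heatFlow (t : ℝ) (y : EuclideanSpace ℝ (Fin n)) : ℝ :=
  ∫ z, heatK n y z t ∂μ

/-- The `m`-th moment of the coordinate `yᵢ - zᵢ` against the heat kernel at `y`, the measure `μ`
being integrated in `z`. The partial derivatives of `heatFlow μ t` are combinations of these. -/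
noncomputable def heatMoment (t : ℝ) (i : Fin n) (m : ℕ) (y : EuclideanSpace ℝ (Fin n)) : ℝ :=
  ∫ z, (y i - z i) ^ m * heatK n y z t ∂μ

theorem heatMoment_zero (t : ℝ) (i : Fin n) : heatMoment μ t i 0 = heatFlow μ t := by
  ext y
  simp only [heatMoment, heatFlow, pow_zero, one_mul]

variable [IsFiniteMeasure μ]

theorem integrable_mul_heatK (ht : 0 < t) {g : EuclideanSpace ℝ (Fin n) → ℝ} {m : ℕ}
    {y : EuclideanSpace ℝ (Fin n)} (hg : Continuous g) (hgm : ∀ z, |g z| ≤ ‖y - z‖ ^ m) :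
    Integrable (fun z => g z * heatK n y z t) μ := by
  obtain ⟨C, hC⟩ := exists_norm_pow_mul_heatK_le n ht m
  refine .of_bound (by fun_prop) C (.of_forall fun z => ?_)
  have hK := (heatK_pos ht y z).le
  calc ‖g z * heatK n y z t‖ = |g z| * heatK n y z t := by
        rw [norm_mul, norm_eq_abs, norm_of_nonneg hK]
    _ ≤ ‖y - z‖ ^ m * heatK n y z t := by
        gcongr
        exact hgm z
    _ ≤ C := hC y z

theorem integrable_heatK (ht : 0 < t) (y : EuclideanSpace ℝ (Fin n)) :
    Integrable (fun z => heatK n y z t) μ := by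
  simpa using integrable_mul_heatK μ ht (g := 1) (m := 0) (y := y) continuous_one (by simp)

theorem integrable_momentKernel (ht : 0 < t) (i : Fin n) (m : ℕ) (y : EuclideanSpace ℝ (Fin n)) :
    Integrable (fun z => (y i - z i) ^ m * heatK n y z t) μ := by
  refine integrable_mul_heatK μ ht (m := m) (by fun_prop) fun z => ?_
  rw [abs_pow]
  gcongr
  exact abs_sub_apply_le_norm_sub y z i

theorem heatFlow_pos [NeZero μ] (ht : 0 < t) (y : EuclideanSpace ℝ (Fin n)) :
    0 < heatFlow μ t y :=
  integral_pos_of_pos (heatK_pos ht y) (integrable_heatK μ ht y)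

theorem hasFDerivAt_heatMoment (ht : 0 < t) (i : Fin n) (m : ℕ) (y : EuclideanSpace ℝ (Fin n)) :
    HasFDerivAt (heatMoment μ t i m) (∫ z, fderivMomentKernel t i m y z ∂μ) y := by
  obtain ⟨C, hC⟩ := exists_norm_fderivMomentKernel_le (n := n) ht i m
  exact hasFDerivAt_integral_of_norm_fderiv_le (integrable_momentKernel μ ht i m)
    (continuous_fderivMomentKernel t i m y).aestronglyMeasurable
    (hasFDerivAt_momentKernel t i m) hC

theorem differentiable_heatMoment (ht : 0 < t) (i : Fin n) (m : ℕ) :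
    Differentiable ℝ (heatMoment μ t i m) :=
  fun y => (hasFDerivAt_heatMoment μ ht i m y).differentiableAt

theorem integrable_fderivMomentKernel (ht : 0 < t) (i : Fin n) (m : ℕ)
    (y : EuclideanSpace ℝ (Fin n)) : Integrable (fderivMomentKernel t i m y) μ := by
  obtain ⟨C, hC⟩ := exists_norm_fderivMomentKernel_le (n := n) ht i m
  exact .of_bound (by fun_prop) C (.of_forall (hC y))

theorem pdv_heatMoment (ht : 0 < t) (i : Fin n) (m : ℕ) (y : EuclideanSpace ℝ (Fin n)) :
    pdv i (heatMoment μ t i m) y =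
      m * heatMoment μ t i (m - 1) y - (2 * t)⁻¹ * heatMoment μ t i (m + 1) y := by
  have hint := integrable_momentKernel μ ht i
  rw [pdv, (hasFDerivAt_heatMoment μ ht i m y).fderiv,
    ContinuousLinearMap.integral_apply (integrable_fderivMomentKernel μ ht i m y)]
  simp only [fderivMomentKernel_apply_single]
  rw [integral_sub ((hint _ y).const_mul _) ((hint _ y).const_mul _), integral_const_mul,
    integral_const_mul, heatMoment, heatMoment]

theorem pdv_heatFlow (ht : 0 < t) (i : Fin n) :
    pdv i (heatFlow μ t) = fun y => -(2 * t)⁻¹ * heatMoment μ t i 1 y := by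
  ext y
  rw [← heatMoment_zero μ t i, pdv_heatMoment μ ht]
  simp

theorem differentiable_heatFlow (ht : 0 < t) : Differentiable ℝ (heatFlow μ t) := by
  rcases isEmpty_or_nonempty (Fin n) with _ | ⟨⟨i⟩⟩
  · exact fun y => (hasFDerivAt_of_subsingleton _ y).differentiableAt
  · rw [← heatMoment_zero μ t i]
    exact differentiable_heatMoment μ ht i 0

theorem differentiable_pdv_heatFlow (ht : 0 < t) (i : Fin n) :
    Differentiable ℝ (pdv i (heatFlow μ t)) := by
  rw [pdv_heatFlow μ ht]
  exact (differentiable_heatMoment μ ht i 1).const_mul _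

theorem pdv_pdv_heatFlow (ht : 0 < t) (i : Fin n) (y : EuclideanSpace ℝ (Fin n)) :
    pdv i (pdv i (heatFlow μ t)) y =
      (2 * t)⁻¹ ^ 2 * heatMoment μ t i 2 y - (2 * t)⁻¹ * heatFlow μ t y := by
  rw [pdv_heatFlow μ ht, pdv, fderiv_const_mul (differentiable_heatMoment μ ht i 1 y)]
  change -(2 * t)⁻¹ * pdv i (heatMoment μ t i 1) y = _
  rw [pdv_heatMoment μ ht, ← heatMoment_zero μ t i]
  push_cast
  ring

theorem sq_heatMoment_one_le (ht : 0 < t) (i : Fin n) (y : EuclideanSpace ℝ (Fin n)) :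
    heatMoment μ t i 1 y ^ 2 ≤ heatFlow μ t y * heatMoment μ t i 2 y := by
  have hint := integrable_momentKernel μ ht i
  simpa [heatMoment, heatFlow] using sq_integral_mul_le (fun z => (heatK_pos ht y z).le)
    (integrable_heatK μ ht y) (by simpa using hint 1 y) (hint 2 y)

theorem sq_pdv_heatFlow_le (ht : 0 < t) (i : Fin n) (y : EuclideanSpace ℝ (Fin n)) :
    pdv i (heatFlow μ t) y ^ 2 ≤
      heatFlow μ t y * (pdv i (pdv i (heatFlow μ t)) y + (2 * t)⁻¹ * heatFlow μ t y) :=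
  calc pdv i (heatFlow μ t) y ^ 2 = (2 * t)⁻¹ ^ 2 * heatMoment μ t i 1 y ^ 2 := by
        rw [pdv_heatFlow μ ht]
        ring
    _ ≤ (2 * t)⁻¹ ^ 2 * (heatFlow μ t y * heatMoment μ t i 2 y) := by
        gcongr
        exact sq_heatMoment_one_le μ ht i y
    _ = _ := by
        rw [pdv_pdv_heatFlow μ ht]
        ring

theorem sq_norm_gradient_heatFlow_le (ht : 0 < t) (y : EuclideanSpace ℝ (Fin n)) :
    ‖gradient (heatFlow μ t) y‖ ^ 2 ≤
      heatFlow μ t y * (lap (heatFlow μ t) y + n / (2 * t) * heatFlow μ t y) :=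
  calc ‖gradient (heatFlow μ t) y‖ ^ 2 = ∑ i, pdv i (heatFlow μ t) y ^ 2 := norm_gradient_sq _ y
    _ ≤ ∑ i, heatFlow μ t y * (pdv i (pdv i (heatFlow μ t)) y + (2 * t)⁻¹ * heatFlow μ t y) :=
        Finset.sum_le_sum fun i _ => sq_pdv_heatFlow_le μ ht i y
    _ = _ := by
        rw [← Finset.mul_sum, Finset.sum_add_distrib, ← lap]
        simp [div_eq_mul_inv, mul_assoc]

end HeatFlow

theorem stmt7_general {n : ℕ} (μ : Measure (EuclideanSpace ℝ (Fin n))) [IsFiniteMeasure μ]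
    [NeZero μ] (u : EuclideanSpace ℝ (Fin n) → ℝ → ℝ)
    (hu : ∀ y t, u y t = ∫ z, heatK n y z t ∂μ) :
    ∀ (y : EuclideanSpace ℝ (Fin n)) (t : ℝ), 0 < t →
      (0 ≤ lap (fun z => Real.log (u z t)) y + n / (2 * t))
      ∧ 0 ≤ lap (fun z => u z t) y - ‖gradient (fun z => u z t) y‖ ^ 2 / u y t
            + (n / (2 * t)) * u y t := by
  intro y t ht
  obtain rfl : u = fun y t => heatFlow μ t y := funext₂ hu
  have hpos : 0 < heatFlow μ t y := heatFlow_pos μ ht y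
  have hlog : lap (fun z => log (heatFlow μ t z)) y + n / (2 * t) =
      (lap (heatFlow μ t) y - ‖gradient (heatFlow μ t) y‖ ^ 2 / heatFlow μ t y
        + n / (2 * t) * heatFlow μ t y) / heatFlow μ t y := by
    rw [lap_log (.of_forall (differentiable_heatFlow μ ht))
      (fun i => differentiable_pdv_heatFlow μ ht i y) hpos.ne']
    field_simp
  have hquot : 0 ≤ lap (heatFlow μ t) y - ‖gradient (heatFlow μ t) y‖ ^ 2 / heatFlow μ t y
      + n / (2 * t) * heatFlow μ t y := by
    have := (div_le_iff₀' hpos).2 (sq_norm_gradient_heatFlow_le μ ht y)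
    linarith
  exact ⟨hlog ▸ div_nonneg hquot hpos.le, hquot⟩

/-- The Li–Yau inequality on ℝⁿ: for the positive solution `u` of the heat
equation with initial data `u₀`, `Δ log u + n/(2t) ≥ 0`; equivalently
`Δu - ‖∇u‖²/u + (n/(2t)) u ≥ 0`. -/
theorem stmt7 (n : ℕ) (hn : 1 ≤ n)
    (u₀ : EuclideanSpace ℝ (Fin n) → ℝ) (hc : Continuous u₀)
    (hsupp : HasCompactSupport u₀) (hnn : ∀ z, 0 ≤ u₀ z) (hne : ∃ z, u₀ z ≠ 0)
    (u : EuclideanSpace ℝ (Fin n) → ℝ → ℝ)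
    (hu : ∀ y t, u y t = ∫ z, heatK n y z t * u₀ z) :
    ∀ (y : EuclideanSpace ℝ (Fin n)) (t : ℝ), 0 < t →
      (0 ≤ lap (fun z => Real.log (u z t)) y + n / (2 * t))
      ∧ 0 ≤ lap (fun z => u z t) y - ‖gradient (fun z => u z t) y‖ ^ 2 / u y t
            + (n / (2 * t)) * u y t := by
  have := isFiniteMeasure_withDensity_ofReal
    (hc.integrable_of_hasCompactSupport hsupp (μ := volume)).2
  have := neZero_withDensity_ofReal (μ := volume) hc (hne.imp fun z hz => (hnn z).lt_of_ne' hz)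
  exact stmt7_general (volume.withDensity fun z => ENNReal.ofReal (u₀ z)) u fun y t =>
    (hu y t).trans (integral_withDensity_ofReal hc.measurable hnn _).symm
end

section
/- Fix n ≥ 1 and τ > 0. Let H : ℝⁿ → (0,∞) be smooth with H, ‖∇H‖ and ‖∇²H‖ all bounded by C e^{-a‖y‖²} for some constants C, a > 0, and let h : ℝⁿ → (0,∞) be smooth with h, ‖∇h‖ and ‖∇²h‖ bounded and with |log h(y)| ≤ C'(1+‖y‖)^k for some C', k. Define f = -log H - (n/2) log(4πτ) and f̃ = f - log h (so Hh = (4πτ)^{-n/2} e^{-f̃}). Then ∫_{ℝⁿ} [ τ(2Δf̃ - ‖∇f̃‖²) + f̃ - n ] H h dy = ∫_{ℝⁿ} [ τ(2Δf - ‖∇f‖²) + f - n ] H h dy + ∫_{ℝⁿ} ( τ ‖∇h‖²/h - h log h ) H dy. -/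
open Real MeasureTheory Filter Set

/- With `f̃ = f - log h` and `f = c - log H`, passing from `f` to `f̃` changes the integrand
pointwise by `(τ ‖∇h‖² / h - h log h) H - 2 τ div (H ∇h)`, and the divergence integrates to zero.

Everything is integrable because a nonnegative `C²` function `φ` with `φ` and its Hessian bounded
by `M` satisfies `‖∇φ‖² ≤ 4 M φ`. Applied on unit balls this controls `‖∇H‖² / H` by the decay of
`H` and its Hessian, and applied globally it bounds `‖∇h‖² / h`. The logarithmic terms are handled
by `|x log x| ≤ (x ^ (1 + ε) + x ^ (1 - ε)) / ε`. -/

open Module InnerProductSpace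
open scoped Gradient Laplacian Topology ContDiff

section RealInequalities

theorem abs_mul_log_le_rpow_add_rpow {x ε : ℝ} (hx : 0 < x) (hε : 0 < ε) :
    |x * log x| ≤ (x ^ (1 + ε) + x ^ (1 - ε)) / ε := by
  have hupper : x * log x ≤ x ^ (1 + ε) / ε := by
    rw [rpow_add hx, rpow_one, mul_div_assoc]
    exact mul_le_mul_of_nonneg_left (log_le_rpow_div hx.le hε) hx.le
  have hlower : -(x * log x) ≤ x ^ (1 - ε) / ε := by
    rw [sub_eq_add_neg, rpow_add hx, rpow_one, mul_div_assoc, ← mul_neg, ← log_inv,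
      rpow_neg_eq_inv_rpow]
    exact mul_le_mul_of_nonneg_left (log_le_rpow_div (inv_pos.2 hx).le hε) hx.le
  have h₁ : 0 ≤ x ^ (1 + ε) / ε := by positivity
  have h₂ : 0 ≤ x ^ (1 - ε) / ε := by positivity
  rw [add_div, abs_le]
  constructor <;> linarith

theorem exp_neg_mul_sq_le_one_add_rpow_neg {a p r : ℝ} (ha : 0 < a) (hp : 0 ≤ p) (hr : 0 ≤ r) :
    exp (-a * r ^ 2) ≤ exp (p ^ 2 / (4 * a)) * (1 + r) ^ (-p) := by
  have hpow : exp (-(p * r)) ≤ (1 + r) ^ (-p) := by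
    rw [rpow_neg (by positivity), exp_neg, mul_comm, exp_mul]
    gcongr
    linarith [add_one_le_exp r]
  have hexp : -a * r ^ 2 ≤ p ^ 2 / (4 * a) + -(p * r) := by
    have hsq : p ^ 2 / (4 * a) - p * r + a * r ^ 2 = (p - 2 * a * r) ^ 2 / (4 * a) := by
      field_simp
      ring
    have : 0 ≤ (p - 2 * a * r) ^ 2 / (4 * a) := by positivity
    linarith
  calc exp (-a * r ^ 2) ≤ exp (p ^ 2 / (4 * a)) * exp (-(p * r)) := by
        rw [← exp_add]
        exact exp_le_exp.2 hexp
    _ ≤ exp (p ^ 2 / (4 * a)) * (1 + r) ^ (-p) := by gcongr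

theorem one_add_norm_rpow_neg_le_of_dist_le_one {F : Type*} [SeminormedAddCommGroup F] {p : ℝ}
    (hp : 0 ≤ p) {y z : F} (hzy : dist z y ≤ 1) :
    (1 + ‖z‖) ^ (-p) ≤ 2 ^ p * (1 + ‖y‖) ^ (-p) := by
  have hnorm : (1 + ‖y‖) / 2 ≤ 1 + ‖z‖ := by
    have := norm_le_norm_add_norm_sub z y
    rw [← dist_eq_norm] at this
    linarith [norm_nonneg z]
  calc (1 + ‖z‖) ^ (-p) ≤ ((1 + ‖y‖) / 2) ^ (-p) :=
        rpow_le_rpow_of_nonpos (by positivity) hnorm (neg_nonpos.2 hp)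
    _ = 2 ^ p * (1 + ‖y‖) ^ (-p) := by
        rw [div_rpow (by positivity) zero_le_two, rpow_neg zero_le_two, div_inv_eq_mul, mul_comm]

end RealInequalities

section SecondOrder

variable {E F : Type*} [NormedAddCommGroup E] [NormedSpace ℝ E] [NormedAddCommGroup F]
  [NormedSpace ℝ F] {φ : E → F}

theorem norm_fderiv_fderiv (φ : E → F) (y : E) :
    ‖fderiv ℝ (fderiv ℝ φ) y‖ = ‖iteratedFDeriv ℝ 2 φ y‖ := by
  rw [← norm_iteratedFDeriv_fderiv, ← norm_iteratedFDeriv_fderiv, norm_iteratedFDeriv_zero]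

theorem contDiff_one_fderiv (hφ : ContDiff ℝ 2 φ) : ContDiff ℝ 1 (fderiv ℝ φ) :=
  hφ.fderiv_right one_add_one_eq_two.le

theorem fderiv_fderiv_apply (hφ : ContDiff ℝ 2 φ) (y v w : E) :
    fderiv ℝ (fun x => fderiv ℝ φ x v) y w = fderiv ℝ (fderiv ℝ φ) y w v := by
  have hφ' := (contDiff_one_fderiv hφ).differentiable one_ne_zero y
  simp [fderiv_clm_apply hφ' (differentiableAt_const v)]

theorem norm_sub_sub_fderiv_le_of_norm_iteratedFDeriv_two_le (hφ : ContDiff ℝ 2 φ) {M : ℝ}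
    {y z : E} (hM : ∀ w ∈ Metric.closedBall y (dist z y), ‖iteratedFDeriv ℝ 2 φ w‖ ≤ M) :
    ‖φ z - φ y - fderiv ℝ φ y (z - y)‖ ≤ M * ‖z - y‖ ^ 2 := by
  have hφ' : Differentiable ℝ (fderiv ℝ φ) :=
    (contDiff_one_fderiv hφ).differentiable one_ne_zero
  have hball : Convex ℝ (Metric.closedBall y (dist z y)) := convex_closedBall y _
  have hy : y ∈ Metric.closedBall y (dist z y) := Metric.mem_closedBall_self dist_nonneg
  have hM₀ : 0 ≤ M := (norm_nonneg _).trans (hM y hy)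
  have hfderiv : ∀ w ∈ Metric.closedBall y (dist z y),
      ‖fderiv ℝ φ w - fderiv ℝ φ y‖ ≤ M * dist z y := fun w hw =>
    (hball.norm_image_sub_le_of_norm_fderiv_le (fun x _ => hφ' x)
      (fun x hx => (norm_fderiv_fderiv φ x).trans_le (hM x hx)) hy hw).trans
      (mul_le_mul_of_nonneg_left (mem_closedBall_iff_norm.1 hw) hM₀)
  have := hball.norm_image_sub_le_of_norm_fderiv_le'
    (fun w _ => hφ.differentiable two_ne_zero w) hfderiv hy (Metric.mem_closedBall.2 le_rfl)
  rwa [dist_eq_norm, mul_assoc, ← sq] at this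

theorem integrable_mul_fderiv_fderiv_apply [MeasurableSpace E] [OpensMeasurableSpace E]
    {μ : Measure E} {u v : E → ℝ} (hu : AEStronglyMeasurable u μ) (hv : ContDiff ℝ 2 v)
    (huv : Integrable (fun y => |u y| * ‖iteratedFDeriv ℝ 2 v y‖) μ) (e : E) :
    Integrable (fun y => u y * fderiv ℝ (fderiv ℝ v) y e e) μ := by
  have hcont : Continuous fun y => fderiv ℝ (fderiv ℝ v) y e e :=
    (((contDiff_one_fderiv hv).continuous_fderiv one_ne_zero).clm_apply
      continuous_const).clm_apply continuous_const
  refine (huv.mul_const (‖e‖ * ‖e‖)).mono' (hu.mul hcont.aestronglyMeasurable)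
    (.of_forall fun y => ?_)
  rw [norm_mul, ← norm_fderiv_fderiv, norm_eq_abs (u y), mul_assoc, ← mul_assoc ‖_‖]
  gcongr
  exact ContinuousLinearMap.le_opNorm₂ _ _ _

end SecondOrder

section Gradient

variable {E : Type*} [NormedAddCommGroup E] [InnerProductSpace ℝ E] [CompleteSpace E]
  {φ ψ : E → ℝ} {y : E}

theorem norm_gradient (φ : E → ℝ) (y : E) : ‖∇ φ y‖ = ‖fderiv ℝ φ y‖ :=
  (toDual ℝ E).symm.norm_map _

theorem continuous_gradient (hφ : ContDiff ℝ 1 φ) : Continuous (∇ φ) :=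
  (toDual ℝ E).symm.continuous.comp (hφ.continuous_fderiv one_ne_zero)

theorem gradient_fun_sub (hφ : DifferentiableAt ℝ φ y) (hψ : DifferentiableAt ℝ ψ y) :
    ∇ (fun x => φ x - ψ x) y = ∇ φ y - ∇ ψ y := by
  simp only [gradient, fderiv_fun_sub hφ hψ, map_sub]

theorem gradient_log (hφ : DifferentiableAt ℝ φ y) (hy : φ y ≠ 0) :
    ∇ (fun x => log (φ x)) y = (φ y)⁻¹ • ∇ φ y := by
  simp only [gradient, fderiv.log hφ hy, map_smul]

theorem mul_norm_gradient_le_of_norm_iteratedFDeriv_two_le (hφ : ContDiff ℝ 2 φ)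
    (hφ₀ : ∀ z, 0 ≤ φ z) {M s : ℝ} (hs : 0 ≤ s)
    (hM : ∀ z ∈ Metric.closedBall y s, ‖iteratedFDeriv ℝ 2 φ z‖ ≤ M) :
    s * ‖∇ φ y‖ ≤ φ y + M * s ^ 2 := by
  rcases eq_or_ne (∇ φ y) 0 with hzero | hne
  · have hM₀ : 0 ≤ M := (norm_nonneg _).trans (hM y (Metric.mem_closedBall_self hs))
    rw [hzero, norm_zero, mul_zero]
    exact add_nonneg (hφ₀ y) (by positivity)
  have hg : 0 < ‖∇ φ y‖ := norm_pos_iff.2 hne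
  let z : E := y - (s / ‖∇ φ y‖) • ∇ φ y
  have hzy : z - y = -((s / ‖∇ φ y‖) • ∇ φ y) := sub_sub_cancel_left _ _
  have hnorm : ‖z - y‖ = s := by
    rw [hzy, norm_neg, norm_smul, norm_of_nonneg (by positivity), div_mul_cancel₀ _ hg.ne']
  have hslope : fderiv ℝ φ y (z - y) = -(s * ‖∇ φ y‖) := by
    rw [hzy, map_neg, map_smul, ← inner_gradient_left, real_inner_self_eq_norm_sq, smul_eq_mul]
    field_simp
  have htaylor := norm_sub_sub_fderiv_le_of_norm_iteratedFDeriv_two_le hφ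
    (by rwa [dist_eq_norm, hnorm] : ∀ w ∈ Metric.closedBall y (dist z y), _ ≤ M)
  rw [hnorm, hslope] at htaylor
  linarith [(abs_le.1 htaylor).2, hφ₀ z]

/- Moving a distance `s ≤ 1` down the gradient lowers `φ` by at least `s ‖∇φ‖ - M s²`, and `φ`
cannot become negative; `s = ‖∇φ‖ / (2M)` is the optimal step. -/
theorem norm_gradient_sq_le_of_norm_iteratedFDeriv_two_le (hφ : ContDiff ℝ 2 φ)
    (hφ₀ : ∀ z, 0 ≤ φ z) {M : ℝ} (hy : φ y ≤ M)
    (hM : ∀ z ∈ Metric.closedBall y 1, ‖iteratedFDeriv ℝ 2 φ z‖ ≤ M) :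
    ‖∇ φ y‖ ^ 2 ≤ 4 * M * φ y := by
  have hg : ‖∇ φ y‖ ≤ 2 * M := by
    have := mul_norm_gradient_le_of_norm_iteratedFDeriv_two_le hφ hφ₀ zero_le_one hM
    linarith
  rcases ((hφ₀ y).trans hy).eq_or_lt with rfl | hMpos
  · rw [le_antisymm (by simpa using hg) (norm_nonneg (∇ φ y))]
    simp
  have hs : ‖∇ φ y‖ / (2 * M) ≤ 1 := (div_le_one (by positivity)).2 hg
  have hstep := mul_norm_gradient_le_of_norm_iteratedFDeriv_two_le hφ hφ₀ (by positivity)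
    fun z hz => hM z (Metric.closedBall_subset_closedBall hs hz)
  field_simp at hstep
  linarith

variable [MeasurableSpace E] [BorelSpace E] {μ : Measure E}

theorem integrable_fderiv_apply_mul_fderiv_apply
    (hφψ : Integrable (fun y => ‖∇ φ y‖ * ‖∇ ψ y‖) μ) (e : E) :
    Integrable (fun y => fderiv ℝ φ y e * fderiv ℝ ψ y e) μ := by
  refine (hφψ.mul_const (‖e‖ ^ 2)).mono' ((measurable_fderiv_apply_const ℝ φ e).mul
    (measurable_fderiv_apply_const ℝ ψ e)).aestronglyMeasurable (.of_forall fun y => ?_)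
  calc ‖fderiv ℝ φ y e * fderiv ℝ ψ y e‖ = ‖fderiv ℝ φ y e‖ * ‖fderiv ℝ ψ y e‖ := norm_mul _ _
    _ ≤ (‖fderiv ℝ φ y‖ * ‖e‖) * (‖fderiv ℝ ψ y‖ * ‖e‖) := by
        gcongr <;> exact ContinuousLinearMap.le_opNorm _ _
    _ = ‖∇ φ y‖ * ‖∇ ψ y‖ * ‖e‖ ^ 2 := by
        rw [norm_gradient, norm_gradient]
        ring

theorem integrable_mul_fderiv_apply (hφ : AEStronglyMeasurable φ μ)
    (hφψ : Integrable (fun y => |φ y| * ‖∇ ψ y‖) μ) (e : E) :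
    Integrable (fun y => φ y * fderiv ℝ ψ y e) μ := by
  refine (hφψ.mul_const ‖e‖).mono' (hφ.mul
    (measurable_fderiv_apply_const ℝ ψ e).aestronglyMeasurable) (.of_forall fun y => ?_)
  rw [norm_mul, norm_gradient, norm_eq_abs (φ y), mul_assoc]
  gcongr
  exact ContinuousLinearMap.le_opNorm _ _

end Gradient

section Laplacian

variable {E : Type*} [NormedAddCommGroup E] [InnerProductSpace ℝ E] [FiniteDimensional ℝ E]
  {φ : E → ℝ} {y : E}

theorem laplacian_eq_sum_fderiv_fderiv {ι : Type*} [Fintype ι] (b : OrthonormalBasis ι ℝ E)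
    (φ : E → ℝ) (y : E) : Δ φ y = ∑ i, fderiv ℝ (fderiv ℝ φ) y (b i) (b i) := by
  simp [laplacian_eq_iteratedFDeriv_orthonormalBasis φ b, iteratedFDeriv_two_apply]

theorem inner_gradient_gradient {ι : Type*} [Fintype ι] (b : OrthonormalBasis ι ℝ E)
    (u v : E → ℝ) (y : E) :
    ⟪∇ u y, ∇ v y⟫_ℝ = ∑ i, fderiv ℝ u y (b i) * fderiv ℝ v y (b i) := by
  rw [← b.sum_inner_mul_inner]
  exact Finset.sum_congr rfl fun i _ => congr_arg₂ _ inner_gradient_left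
    ((real_inner_comm _ _).trans inner_gradient_left)

theorem abs_laplacian_le (φ : E → ℝ) (y : E) :
    |Δ φ y| ≤ finrank ℝ E * ‖iteratedFDeriv ℝ 2 φ y‖ := by
  let b := stdOrthonormalBasis ℝ E
  rw [laplacian_eq_sum_fderiv_fderiv b, ← norm_fderiv_fderiv]
  calc |∑ i, fderiv ℝ (fderiv ℝ φ) y (b i) (b i)|
      ≤ ∑ i, |fderiv ℝ (fderiv ℝ φ) y (b i) (b i)| := Finset.abs_sum_le_sum_abs _ _
    _ ≤ ∑ _i : Fin (finrank ℝ E), ‖fderiv ℝ (fderiv ℝ φ) y‖ :=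
        Finset.sum_le_sum fun i _ => by
          simpa using (fderiv ℝ (fderiv ℝ φ) y).le_opNorm₂ (b i) (b i)
    _ = finrank ℝ E * ‖fderiv ℝ (fderiv ℝ φ) y‖ := by simp

theorem continuous_laplacian (hφ : ContDiff ℝ 2 φ) : Continuous (Δ φ) := by
  rw [funext (laplacian_eq_sum_fderiv_fderiv (stdOrthonormalBasis ℝ E) φ)]
  exact continuous_finsetSum _ fun i _ => (((contDiff_one_fderiv hφ).continuous_fderiv
    one_ne_zero).clm_apply continuous_const).clm_apply continuous_const

theorem laplacian_log (hφ : ContDiffAt ℝ 2 φ y) (hy : φ y ≠ 0) :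
    Δ (fun x => log (φ x)) y = Δ φ y / φ y - ‖∇ φ y‖ ^ 2 / φ y ^ 2 := by
  have hfderiv : fderiv ℝ (fun x => log (φ x)) =ᶠ[𝓝 y] fun x => (φ x)⁻¹ • fderiv ℝ φ x := by
    filter_upwards [hφ.eventually (by simp), hφ.continuousAt.eventually_ne hy] with x hx hx₀
    exact fderiv.log (hx.differentiableAt two_ne_zero) hx₀
  have hinv : HasFDerivAt (fun x => (φ x)⁻¹) (-(φ y ^ 2)⁻¹ • fderiv ℝ φ y) y :=
    (hasDerivAt_inv hy).comp_hasFDerivAt y (hφ.differentiableAt two_ne_zero).hasFDerivAt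
  have hhess := ((hφ.fderiv_right (m := 1) (by norm_num)).differentiableAt one_ne_zero).hasFDerivAt
  have hsecond (v : E) : fderiv ℝ (fderiv ℝ fun x => log (φ x)) y v v
      = fderiv ℝ (fderiv ℝ φ) y v v / φ y - ⟪∇ φ y, v⟫_ℝ ^ 2 / φ y ^ 2 := by
    rw [hfderiv.fderiv_eq, (hinv.fun_smul hhess).fderiv, inner_gradient_left]
    simp only [neg_smul, add_apply, smul_apply, ContinuousLinearMap.smulRight_apply, neg_apply,
      smul_eq_mul]
    ring
  let b := stdOrthonormalBasis ℝ E
  have hnorm : ‖∇ φ y‖ ^ 2 = ∑ i, ⟪∇ φ y, b i⟫_ℝ ^ 2 := by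
    simp [← b.sum_sq_norm_inner_left]
  simp only [laplacian_eq_sum_fderiv_fderiv b, hsecond, hnorm, Finset.sum_sub_distrib,
    Finset.sum_div]

section Integral

variable [MeasurableSpace E] [BorelSpace E] {μ : Measure E} {u v : E → ℝ}

theorem integrable_mul_laplacian (hu : AEStronglyMeasurable u μ) (hv : ContDiff ℝ 2 v)
    (huv : Integrable (fun y => |u y| * ‖iteratedFDeriv ℝ 2 v y‖) μ) :
    Integrable (fun y => u y * Δ v y) μ := by
  simp only [laplacian_eq_sum_fderiv_fderiv (stdOrthonormalBasis ℝ E), Finset.mul_sum]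
  exact integrable_finsetSum _ fun i _ => integrable_mul_fderiv_fderiv_apply hu hv huv _

theorem integrable_inner_gradient_gradient
    (huv : Integrable (fun y => ‖∇ u y‖ * ‖∇ v y‖) μ) :
    Integrable (fun y => ⟪∇ u y, ∇ v y⟫_ℝ) μ := by
  simp only [inner_gradient_gradient (stdOrthonormalBasis ℝ E)]
  exact integrable_finsetSum _ fun i _ => integrable_fderiv_apply_mul_fderiv_apply huv _

theorem integral_mul_laplacian_eq_neg_integral_inner_gradient [μ.IsAddHaarMeasure]
    (hu : Differentiable ℝ u) (hv : ContDiff ℝ 2 v)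
    (huv : Integrable (fun y => |u y| * ‖∇ v y‖) μ)
    (hduv : Integrable (fun y => ‖∇ u y‖ * ‖∇ v y‖) μ)
    (hud2v : Integrable (fun y => |u y| * ‖iteratedFDeriv ℝ 2 v y‖) μ) :
    ∫ y, u y * Δ v y ∂μ = -∫ y, ⟪∇ u y, ∇ v y⟫_ℝ ∂μ := by
  let b := stdOrthonormalBasis ℝ E
  have hu_meas : AEStronglyMeasurable u μ := hu.continuous.aestronglyMeasurable
  have hv' : Differentiable ℝ (fderiv ℝ v) :=
    (contDiff_one_fderiv hv).differentiable one_ne_zero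
  have hint (i) := integrable_mul_fderiv_fderiv_apply hu_meas hv hud2v (b i)
  have hint' (i) := integrable_fderiv_apply_mul_fderiv_apply hduv (b i)
  have hparts (i) : ∫ y, u y * fderiv ℝ (fderiv ℝ v) y (b i) (b i) ∂μ
      = -∫ y, fderiv ℝ u y (b i) * fderiv ℝ v y (b i) ∂μ := by
    simp only [← fderiv_fderiv_apply hv] at hint ⊢
    exact integral_mul_fderiv_eq_neg_fderiv_mul_of_integrable (hint' i) (hint i)
      (integrable_mul_fderiv_apply hu_meas huv (b i)) (fun y _ => hu y)
      fun y _ => (hv' y).clm_apply (differentiableAt_const _)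
  simp only [laplacian_eq_sum_fderiv_fderiv b, inner_gradient_gradient b, Finset.mul_sum]
  rw [integral_finsetSum _ fun i _ => hint i, integral_finsetSum _ fun i _ => hint' i,
    ← Finset.sum_neg_distrib]
  exact Finset.sum_congr rfl fun i _ => hparts i

theorem integrable_and_integral_mul_laplacian_add_inner_gradient_eq_zero
    [μ.IsAddHaarMeasure] (hu : Differentiable ℝ u) (hu_int : Integrable u μ)
    (hdu_int : Integrable (fun y => ‖∇ u y‖) μ)
    (hv : ContDiff ℝ 2 v) {M₁ M₂ : ℝ} (hdv_le : ∀ y, ‖∇ v y‖ ≤ M₁)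
    (hd2v_le : ∀ y, ‖iteratedFDeriv ℝ 2 v y‖ ≤ M₂) :
    Integrable (fun y => u y * Δ v y + ⟪∇ u y, ∇ v y⟫_ℝ) μ
      ∧ ∫ y, (u y * Δ v y + ⟪∇ u y, ∇ v y⟫_ℝ) ∂μ = 0 := by
  have hdv_meas : AEStronglyMeasurable (fun y => ‖∇ v y‖) μ :=
    (continuous_gradient (hv.of_le one_le_two)).norm.aestronglyMeasurable
  have hd2v_meas : AEStronglyMeasurable (fun y => ‖iteratedFDeriv ℝ 2 v y‖) μ :=
    (hv.continuous_iteratedFDeriv le_rfl).norm.aestronglyMeasurable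
  have hdv_bdd : ∀ᵐ y ∂μ, ‖‖∇ v y‖‖ ≤ M₁ := .of_forall fun y => (norm_norm _).trans_le (hdv_le y)
  have hd2v_bdd : ∀ᵐ y ∂μ, ‖‖iteratedFDeriv ℝ 2 v y‖‖ ≤ M₂ :=
    .of_forall fun y => (norm_norm _).trans_le (hd2v_le y)
  have hduv := hdu_int.mul_bdd hdv_meas hdv_bdd
  have hud2v := hu_int.abs.mul_bdd hd2v_meas hd2v_bdd
  have hlap : Integrable (fun y => u y * Δ v y) μ :=
    integrable_mul_laplacian hu_int.aestronglyMeasurable hv hud2v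
  have hinner := integrable_inner_gradient_gradient hduv
  refine ⟨hlap.add hinner, ?_⟩
  rw [integral_add hlap hinner, integral_mul_laplacian_eq_neg_integral_inner_gradient hu hv
    (hu_int.abs.mul_bdd hdv_meas hdv_bdd) hduv hud2v, neg_add_cancel]

end Integral

end Laplacian

theorem lap_eq_laplacian {n : ℕ} {φ : EuclideanSpace ℝ (Fin n) → ℝ} (hφ : ContDiff ℝ 2 φ)
    (y : EuclideanSpace ℝ (Fin n)) : lap φ y = Δ φ y := by
  rw [laplacian_eq_sum_fderiv_fderiv (EuclideanSpace.basisFun (Fin n) ℝ)]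
  simp only [EuclideanSpace.basisFun_apply, ← fderiv_fderiv_apply hφ]
  rfl

section Decay

variable {E : Type*} [NormedAddCommGroup E] [InnerProductSpace ℝ E] [FiniteDimensional ℝ E]
  {u : E → ℝ} {C p : ℝ}

theorem norm_gradient_sq_le_of_decay (hp : 0 ≤ p) (hu : ContDiff ℝ 2 u) (hu₀ : ∀ y, 0 ≤ u y)
    (hu_le : ∀ y, u y ≤ C * (1 + ‖y‖) ^ (-p))
    (hd2u_le : ∀ y, ‖iteratedFDeriv ℝ 2 u y‖ ≤ C * (1 + ‖y‖) ^ (-p)) (y : E) :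
    ‖∇ u y‖ ^ 2 ≤ 4 * (C * (2 ^ p * (1 + ‖y‖) ^ (-p))) * u y := by
  have hC : 0 ≤ C := by simpa using (hu₀ 0).trans (hu_le 0)
  have hweight (z) (hz : z ∈ Metric.closedBall y 1) :
      C * (1 + ‖z‖) ^ (-p) ≤ C * (2 ^ p * (1 + ‖y‖) ^ (-p)) :=
    mul_le_mul_of_nonneg_left (one_add_norm_rpow_neg_le_of_dist_le_one hp hz) hC
  exact norm_gradient_sq_le_of_norm_iteratedFDeriv_two_le hu hu₀
    ((hu_le y).trans (hweight y (Metric.mem_closedBall_self zero_le_one)))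
    fun z hz => (hd2u_le z).trans (hweight z hz)

variable [MeasurableSpace E] [BorelSpace E] {μ : Measure E} [μ.IsAddHaarMeasure]

theorem integrable_of_norm_le_one_add_norm_rpow_neg {F : Type*} [NormedAddCommGroup F] {g : E → F}
    (hp : finrank ℝ E < p) (hg : AEStronglyMeasurable g μ)
    (hg_le : ∀ y, ‖g y‖ ≤ C * (1 + ‖y‖) ^ (-p)) : Integrable g μ :=
  ((integrable_one_add_norm hp).const_mul C).mono' hg (.of_forall hg_le)

theorem integrable_rpow_of_decay {s : ℝ} (hs : 0 ≤ s) (hps : finrank ℝ E < p * s)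
    (hu : AEStronglyMeasurable u μ) (hu₀ : ∀ y, 0 ≤ u y)
    (hu_le : ∀ y, u y ≤ C * (1 + ‖y‖) ^ (-p)) : Integrable (fun y => u y ^ s) μ := by
  have hC : 0 ≤ C := by simpa using (hu₀ 0).trans (hu_le 0)
  refine integrable_of_norm_le_one_add_norm_rpow_neg (C := C ^ s) hps
    (hu.aemeasurable.pow_const s).aestronglyMeasurable fun y => ?_
  rw [norm_of_nonneg (rpow_nonneg (hu₀ y) s), ← neg_mul, rpow_mul (by positivity),
    ← mul_rpow hC (by positivity)]
  exact rpow_le_rpow (hu₀ y) (hu_le y) hs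

theorem integrable_mul_log_of_decay (hp : finrank ℝ E < p) (hu : AEStronglyMeasurable u μ)
    (hu₀ : ∀ y, 0 < u y) (hu_le : ∀ y, u y ≤ C * (1 + ‖y‖) ^ (-p)) :
    Integrable (fun y => u y * log (u y)) μ := by
  have hp₀ : 0 < p := (Nat.cast_nonneg _).trans_lt hp
  obtain ⟨ε, hε, hε₁, hεp⟩ : ∃ ε : ℝ, 0 < ε ∧ ε ≤ 1 ∧ finrank ℝ E < p * (1 - ε) := by
    refine ⟨(p - finrank ℝ E) / (2 * p), div_pos (sub_pos.2 hp) (by positivity), ?_, ?_⟩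
    · rw [div_le_one (by positivity)]
      linarith [(finrank ℝ E).cast_nonneg (α := ℝ)]
    · field_simp
      linarith
  have hupper : Integrable (fun y => u y ^ (1 + ε)) μ :=
    integrable_rpow_of_decay (by positivity) (by nlinarith) hu (fun y => (hu₀ y).le) hu_le
  have hlower : Integrable (fun y => u y ^ (1 - ε)) μ :=
    integrable_rpow_of_decay (sub_nonneg.2 hε₁) hεp hu (fun y => (hu₀ y).le) hu_le
  exact ((hupper.add hlower).div_const ε).mono'
    (hu.mul hu.aemeasurable.log.aestronglyMeasurable)
    (.of_forall fun y => abs_mul_log_le_rpow_add_rpow (hu₀ y) hε)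

theorem integrable_norm_gradient_of_decay (hp : finrank ℝ E < p) (hu : ContDiff ℝ 2 u)
    (hu₀ : ∀ y, 0 ≤ u y) (hu_le : ∀ y, u y ≤ C * (1 + ‖y‖) ^ (-p))
    (hd2u_le : ∀ y, ‖iteratedFDeriv ℝ 2 u y‖ ≤ C * (1 + ‖y‖) ^ (-p)) :
    Integrable (fun y => ‖∇ u y‖) μ := by
  have hp₀ : 0 ≤ p := (Nat.cast_nonneg _).trans hp.le
  have hC : 0 ≤ C := by simpa using (hu₀ 0).trans (hu_le 0)
  have h2p : (1 : ℝ) ≤ 2 ^ p := one_le_rpow one_le_two hp₀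
  refine integrable_of_norm_le_one_add_norm_rpow_neg (C := 2 * (C * 2 ^ p)) hp
    (continuous_gradient (hu.of_le one_le_two)).norm.aestronglyMeasurable fun y => ?_
  rw [norm_norm]
  refine le_of_sq_le_sq ?_ (by positivity)
  calc ‖∇ u y‖ ^ 2 ≤ 4 * (C * (2 ^ p * (1 + ‖y‖) ^ (-p))) * u y :=
        norm_gradient_sq_le_of_decay hp₀ hu hu₀ hu_le hd2u_le y
    _ ≤ 4 * (C * (2 ^ p * (1 + ‖y‖) ^ (-p))) * (C * (2 ^ p * (1 + ‖y‖) ^ (-p))) := by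
        gcongr
        refine (hu_le y).trans ?_
        gcongr
        exact le_mul_of_one_le_left (by positivity) h2p
    _ = (2 * (C * 2 ^ p) * (1 + ‖y‖) ^ (-p)) ^ 2 := by ring

theorem integrable_norm_gradient_sq_div_of_decay (hp : finrank ℝ E < p) (hu : ContDiff ℝ 2 u)
    (hu₀ : ∀ y, 0 < u y) (hu_le : ∀ y, u y ≤ C * (1 + ‖y‖) ^ (-p))
    (hd2u_le : ∀ y, ‖iteratedFDeriv ℝ 2 u y‖ ≤ C * (1 + ‖y‖) ^ (-p)) :
    Integrable (fun y => ‖∇ u y‖ ^ 2 / u y) μ := by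
  have hp₀ : 0 ≤ p := (Nat.cast_nonneg _).trans hp.le
  have hcont : Continuous fun y => ‖∇ u y‖ ^ 2 / u y :=
    ((continuous_gradient (hu.of_le one_le_two)).norm.pow 2).div hu.continuous
      fun y => (hu₀ y).ne'
  refine integrable_of_norm_le_one_add_norm_rpow_neg (C := 4 * (C * 2 ^ p)) hp
    hcont.aestronglyMeasurable fun y => ?_
  rw [norm_of_nonneg (div_nonneg (sq_nonneg _) (hu₀ y).le), div_le_iff₀ (hu₀ y)]
  exact (norm_gradient_sq_le_of_decay hp₀ hu (fun y => (hu₀ y).le) hu_le hd2u_le y).trans_eq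
    (by ring)

theorem integrable_laplacian_of_decay (hp : finrank ℝ E < p) (hu : ContDiff ℝ 2 u)
    (hd2u_le : ∀ y, ‖iteratedFDeriv ℝ 2 u y‖ ≤ C * (1 + ‖y‖) ^ (-p)) : Integrable (Δ u) μ := by
  refine integrable_of_norm_le_one_add_norm_rpow_neg (C := finrank ℝ E * C) hp
    (continuous_laplacian hu).aestronglyMeasurable fun y => ?_
  rw [mul_assoc]
  exact (abs_laplacian_le u y).trans (mul_le_mul_of_nonneg_left (hd2u_le y) (Nat.cast_nonneg _))

end Decay

section Entropy

variable {E : Type*} [NormedAddCommGroup E] [InnerProductSpace ℝ E] [FiniteDimensional ℝ E]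
  {f H h : E → ℝ} {τ c : ℝ} {y : E}

/-- The integrand `τ (2 Δf - ‖∇f‖²) + f - n` of Perelman's entropy on the flat space `E` of
dimension `n`; the entropy is its integral against the density with potential `f`. -/
noncomputable def entropyDensity (τ : ℝ) (f : E → ℝ) (y : E) : ℝ :=
  τ * (2 * Δ f y - ‖∇ f y‖ ^ 2) + f y - finrank ℝ E

theorem entropyDensity_const (τ c : ℝ) (y : E) :
    entropyDensity τ (fun _ => c) y = c - finrank ℝ E := by
  simp [entropyDensity, gradient_fun_const]

theorem entropyDensity_sub_log (hf : ContDiffAt ℝ 2 f y) (hh : ContDiffAt ℝ 2 h y)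
    (hy : h y ≠ 0) :
    entropyDensity τ (fun x => f x - log (h x)) y = entropyDensity τ f y
      + τ * (‖∇ h y‖ ^ 2 / h y ^ 2 + 2 * (⟪∇ f y, ∇ h y⟫_ℝ / h y) - 2 * (Δ h y / h y))
      - log (h y) := by
  have hlog : ContDiffAt ℝ 2 (fun x => log (h x)) y := hh.log hy
  have hlap : Δ (fun x => f x - log (h x)) y
      = Δ f y - (Δ h y / h y - ‖∇ h y‖ ^ 2 / h y ^ 2) := by
    rw [← laplacian_log hh hy]
    exact hf.laplacian_sub hlog
  have hgrad : ‖∇ (fun x => f x - log (h x)) y‖ ^ 2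
      = ‖∇ f y‖ ^ 2 - 2 * (⟪∇ f y, ∇ h y⟫_ℝ / h y) + ‖∇ h y‖ ^ 2 / h y ^ 2 := by
    rw [gradient_fun_sub (hf.differentiableAt two_ne_zero) (hlog.differentiableAt two_ne_zero),
      gradient_log (hh.differentiableAt two_ne_zero) hy, norm_sub_sq_real, real_inner_smul_right,
      norm_smul, mul_pow, norm_inv, norm_eq_abs, inv_pow, sq_abs]
    ring
  simp only [entropyDensity, hlap, hgrad]
  ring

theorem entropyDensity_const_sub_log_mul (hH : ContDiffAt ℝ 2 H y) (hy : H y ≠ 0) :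
    entropyDensity τ (fun x => c - log (H x)) y * H y
      = τ * (‖∇ H y‖ ^ 2 / H y - 2 * Δ H y) - H y * log (H y) + (c - finrank ℝ E) * H y := by
  rw [entropyDensity_sub_log contDiffAt_const hH hy, entropyDensity_const, gradient_fun_const,
    inner_zero_left]
  field_simp
  ring

theorem entropyDensity_sub_log_mul_mul (hH : ContDiffAt ℝ 2 H y) (hHy : H y ≠ 0)
    (hh : ContDiffAt ℝ 2 h y) (hhy : h y ≠ 0) :
    entropyDensity τ (fun x => c - log (H x) - log (h x)) y * H y * h y
      = entropyDensity τ (fun x => c - log (H x)) y * H y * h y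
        + (τ * ‖∇ h y‖ ^ 2 / h y - h y * log (h y)) * H y
        - 2 * τ * (H y * Δ h y + ⟪∇ H y, ∇ h y⟫_ℝ) := by
  have hlog : ContDiffAt ℝ 2 (fun x => log (H x)) y := hH.log hHy
  have hgrad : ∇ (fun x => c - log (H x)) y = -((H y)⁻¹ • ∇ H y) := by
    rw [gradient_fun_sub (differentiableAt_const c) (hlog.differentiableAt two_ne_zero),
      gradient_log (hH.differentiableAt two_ne_zero) hHy, gradient_fun_const, zero_sub]
  rw [entropyDensity_sub_log (contDiffAt_const.sub hlog) hh hhy, hgrad, inner_neg_left,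
    real_inner_smul_left]
  field_simp
  ring

variable [MeasurableSpace E] [BorelSpace E] {μ : Measure E} {C p B : ℝ}

theorem integrable_norm_gradient_sq_div_sub_mul_log_mul (hH : Integrable H μ)
    (hh : ContDiff ℝ 2 h) (hh₀ : ∀ y, 0 < h y) (hh_le : ∀ y, h y ≤ B)
    (hd2h_le : ∀ y, ‖iteratedFDeriv ℝ 2 h y‖ ≤ B) :
    Integrable (fun y => (τ * ‖∇ h y‖ ^ 2 / h y - h y * log (h y)) * H y) μ := by
  have hgrad_cont : Continuous (∇ h) := continuous_gradient (hh.of_le one_le_two)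
  have hcont : Continuous fun y => τ * ‖∇ h y‖ ^ 2 / h y - h y * log (h y) :=
    ((continuous_const.mul (hgrad_cont.norm.pow 2)).div hh.continuous fun y => (hh₀ y).ne').sub
      (hh.continuous.mul (hh.continuous.log fun y => (hh₀ y).ne'))
  have hgrad (y) : ‖∇ h y‖ ^ 2 / h y ≤ 4 * B := (div_le_iff₀ (hh₀ y)).2 <|
    norm_gradient_sq_le_of_norm_iteratedFDeriv_two_le hh (fun z => (hh₀ z).le) (hh_le y)
      fun z _ => hd2h_le z
  have hlog (y) : |h y * log (h y)| ≤ B ^ 2 + 1 :=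
    calc |h y * log (h y)| ≤ (h y ^ (1 + 1 : ℝ) + h y ^ (1 - 1 : ℝ)) / 1 :=
          abs_mul_log_le_rpow_add_rpow (hh₀ y) one_pos
      _ = h y ^ 2 + 1 := by norm_num
      _ ≤ B ^ 2 + 1 := by
          gcongr
          exacts [(hh₀ y).le, hh_le y]
  refine hH.bdd_mul (c := |τ| * (4 * B) + (B ^ 2 + 1)) hcont.aestronglyMeasurable
    (.of_forall fun y => (norm_sub_le _ _).trans (add_le_add ?_ (hlog y)))
  rw [mul_div_assoc, norm_mul, norm_eq_abs τ,
    norm_of_nonneg (div_nonneg (sq_nonneg _) (hh₀ y).le)]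
  exact mul_le_mul_of_nonneg_left (hgrad y) (abs_nonneg τ)

variable [μ.IsAddHaarMeasure]

theorem integrable_entropyDensity_const_sub_log_mul (hp : finrank ℝ E < p) (hH : ContDiff ℝ 2 H)
    (hH₀ : ∀ y, 0 < H y) (hH_le : ∀ y, H y ≤ C * (1 + ‖y‖) ^ (-p))
    (hd2H_le : ∀ y, ‖iteratedFDeriv ℝ 2 H y‖ ≤ C * (1 + ‖y‖) ^ (-p)) :
    Integrable (fun y => entropyDensity τ (fun x => c - log (H x)) y * H y) μ := by
  have hH_meas : AEStronglyMeasurable H μ := hH.continuous.aestronglyMeasurable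
  have hH_int : Integrable H μ := integrable_of_norm_le_one_add_norm_rpow_neg hp hH_meas
    fun y => (norm_of_nonneg (hH₀ y).le).trans_le (hH_le y)
  simp only [fun y => entropyDensity_const_sub_log_mul (τ := τ) (c := c) hH.contDiffAt (hH₀ y).ne']
  exact ((((integrable_norm_gradient_sq_div_of_decay hp hH hH₀ hH_le hd2H_le).sub
    ((integrable_laplacian_of_decay hp hH hd2H_le).const_mul 2)).const_mul τ).sub
    (integrable_mul_log_of_decay hp hH_meas hH₀ hH_le)).add (hH_int.const_mul _)

end Entropy

theorem stmt11_general {E : Type*} [NormedAddCommGroup E] [InnerProductSpace ℝ E]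
    [FiniteDimensional ℝ E] [MeasurableSpace E] [BorelSpace E] {μ : Measure E} [μ.IsAddHaarMeasure]
    {H h : E → ℝ} {C p B : ℝ} (τ c : ℝ) (hp : finrank ℝ E < p)
    (hH : ContDiff ℝ 2 H) (hH₀ : ∀ y, 0 < H y) (hH_le : ∀ y, H y ≤ C * (1 + ‖y‖) ^ (-p))
    (hd2H_le : ∀ y, ‖iteratedFDeriv ℝ 2 H y‖ ≤ C * (1 + ‖y‖) ^ (-p))
    (hh : ContDiff ℝ 2 h) (hh₀ : ∀ y, 0 < h y) (hh_le : ∀ y, h y ≤ B)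
    (hd2h_le : ∀ y, ‖iteratedFDeriv ℝ 2 h y‖ ≤ B) :
    ∫ y, entropyDensity τ (fun x => c - log (H x) - log (h x)) y * H y * h y ∂μ
      = ∫ y, entropyDensity τ (fun x => c - log (H x)) y * H y * h y ∂μ
        + ∫ y, (τ * ‖∇ h y‖ ^ 2 / h y - h y * log (h y)) * H y ∂μ := by
  have hH_int : Integrable H μ := integrable_of_norm_le_one_add_norm_rpow_neg hp
    hH.continuous.aestronglyMeasurable fun y => (norm_of_nonneg (hH₀ y).le).trans_le (hH_le y)
  have hentropy : Integrable
      (fun y => entropyDensity τ (fun x => c - log (H x)) y * H y * h y) μ :=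
    (integrable_entropyDensity_const_sub_log_mul hp hH hH₀ hH_le hd2H_le).mul_bdd
      hh.continuous.aestronglyMeasurable
      (.of_forall fun y => (norm_of_nonneg (hh₀ y).le).trans_le (hh_le y))
  have hcorrection : Integrable
      (fun y => (τ * ‖∇ h y‖ ^ 2 / h y - h y * log (h y)) * H y) μ :=
    integrable_norm_gradient_sq_div_sub_mul_log_mul hH_int hh hh₀ hh_le hd2h_le
  have hgrad_le (y) : ‖∇ h y‖ ≤ 2 * B := by
    have := mul_norm_gradient_le_of_norm_iteratedFDeriv_two_le (y := y) hh (fun z => (hh₀ z).le)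
      zero_le_one fun z _ => hd2h_le z
    linarith [hh_le y]
  obtain ⟨hdiv_int, hdiv⟩ : Integrable (fun y => H y * Δ h y + ⟪∇ H y, ∇ h y⟫_ℝ) μ
      ∧ ∫ y, (H y * Δ h y + ⟪∇ H y, ∇ h y⟫_ℝ) ∂μ = 0 :=
    integrable_and_integral_mul_laplacian_add_inner_gradient_eq_zero
      (hH.differentiable two_ne_zero) hH_int
      (integrable_norm_gradient_of_decay hp hH (fun y => (hH₀ y).le) hH_le hd2H_le)
      hh hgrad_le hd2h_le
  simp only [fun y => entropyDensity_sub_log_mul_mul (τ := τ) (c := c) hH.contDiffAt (hH₀ y).ne'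
    hh.contDiffAt (hh₀ y).ne']
  rw [integral_sub (hentropy.fun_add hcorrection) (hdiv_int.const_mul _),
    integral_add hentropy hcorrection, integral_const_mul, hdiv, mul_zero, sub_zero]

/-- The entropy decomposition identity
`𝒲_h(g,H,τ) = 𝒲(g,Hh,τ) + ∫ (τ‖∇h‖²/h - h log h) H dy` on flat ℝⁿ:
with `f = -log H - (n/2) log(4πτ)` and `f̃ = f - log h`,
`∫ [τ(2Δf̃-‖∇f̃‖²)+f̃-n] H h = ∫ [τ(2Δf-‖∇f‖²)+f-n] H h + ∫ (τ‖∇h‖²/h - h log h) H`. -/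
theorem stmt11 (n : ℕ) (hn : 1 ≤ n) (τ : ℝ) (hτ : 0 < τ)
    (H h : EuclideanSpace ℝ (Fin n) → ℝ)
    (hHsmooth : ContDiff ℝ (⊤ : ℕ∞) H) (hHpos : ∀ y, 0 < H y)
    (hHdecay : ∃ C a : ℝ, 0 < C ∧ 0 < a ∧ ∀ y,
      H y ≤ C * Real.exp (-a * ‖y‖ ^ 2)
      ∧ ‖gradient H y‖ ≤ C * Real.exp (-a * ‖y‖ ^ 2)
      ∧ ‖iteratedFDeriv ℝ 2 H y‖ ≤ C * Real.exp (-a * ‖y‖ ^ 2))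
    (hhsmooth : ContDiff ℝ (⊤ : ℕ∞) h) (hhpos : ∀ y, 0 < h y)
    (hhbdd : ∃ C' : ℝ, ∀ y,
      h y ≤ C' ∧ ‖gradient h y‖ ≤ C' ∧ ‖iteratedFDeriv ℝ 2 h y‖ ≤ C')
    (hlogh : ∃ (C' : ℝ) (k : ℕ), ∀ y, |Real.log (h y)| ≤ C' * (1 + ‖y‖) ^ k)
    (f ftil : EuclideanSpace ℝ (Fin n) → ℝ)
    (hf : ∀ y, f y = -Real.log (H y) - (n / 2 : ℝ) * Real.log (4 * π * τ))
    (hftil : ∀ y, ftil y = f y - Real.log (h y)) :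
    (∫ y, (τ * (2 * lap ftil y - ‖gradient ftil y‖ ^ 2) + ftil y - n) * H y * h y)
      = (∫ y, (τ * (2 * lap f y - ‖gradient f y‖ ^ 2) + f y - n) * H y * h y)
        + ∫ y, (τ * ‖gradient h y‖ ^ 2 / h y - h y * Real.log (h y)) * H y := by
  obtain ⟨C, a, hC, ha, hH_le⟩ := hHdecay
  obtain ⟨B, hh_le⟩ := hhbdd
  have hdecay (y : EuclideanSpace ℝ (Fin n)) : C * exp (-a * ‖y‖ ^ 2)
      ≤ C * exp ((n + 1) ^ 2 / (4 * a)) * (1 + ‖y‖) ^ (-(n + 1 : ℝ)) := by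
    simpa only [mul_assoc] using mul_le_mul_of_nonneg_left
      (exp_neg_mul_sq_le_one_add_rpow_neg ha (by positivity) (norm_nonneg y)) hC.le
  have hH : ContDiff ℝ 2 H := contDiff_infty.1 hHsmooth 2
  have hh : ContDiff ℝ 2 h := contDiff_infty.1 hhsmooth 2
  obtain rfl : f = fun y => -(n / 2 : ℝ) * log (4 * π * τ) - log (H y) :=
    funext fun y => (hf y).trans (by ring)
  obtain rfl : ftil = fun y => -(n / 2 : ℝ) * log (4 * π * τ) - log (H y) - log (h y) :=
    funext hftil
  have hf₂ : ContDiff ℝ 2 fun y => -(n / 2 : ℝ) * log (4 * π * τ) - log (H y) :=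
    contDiff_const.sub (hH.log fun y => (hHpos y).ne')
  simpa only [entropyDensity, lap_eq_laplacian hf₂,
    lap_eq_laplacian (hf₂.sub (hh.log fun y => (hhpos y).ne')), finrank_euclideanSpace_fin] using
    stmt11_general τ _ (by simp) hH hHpos (fun y => (hH_le y).1.trans (hdecay y))
      (fun y => (hH_le y).2.2.trans (hdecay y)) hh hhpos (fun y => (hh_le y).1)
      fun y => (hh_le y).2.2
end
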